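/- The tuple g = (g_1,…,g_n) defined by g_j(y) = σ_j(y)/(a|y|² + b)² satisfies L(g) = g pointwise on ℝⁿ; that is, g is an eigenfunction of −L with eigenvalue −1 (corresponding to the time translation of the soliton W). -/

import Mathlib

open scoped BigOperators

noncomputable section

/-- Euclidean space `ℝⁿ`. -/
abbrev En (n : ℕ) := EuclideanSpace ℝ (Fin n)

/-- `n × n` real matrices, represented entrywise. -/
abbrev Mat (n : ℕ) := Fin n → Fin n → ℝ

variable {n : ℕ}

/-- Frobenius inner product `⟨A,B⟩_F = tr(AᵀB) = Σ_{μν} A_{μν} B_{μν}`. -/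
def fipE (A B : Mat n) : ℝ := ∑ μ, ∑ ν, A μ ν * B μ ν

/-- Frobenius norm. -/
def fnormE (A : Mat n) : ℝ := Real.sqrt (fipE A A)

/-- Matrix commutator `[A, B] = AB − BA`, entrywise. -/
def brkt (A B : Mat n) : Mat n := fun μ ν => ∑ k, (A μ k * B k ν - B μ k * A k ν)

/-- `A` is skew-symmetric. -/
def skewM (A : Mat n) : Prop := ∀ μ ν, A ν μ = -A μ ν

/-- Partial derivative `∂_i f` of a scalar function on `ℝⁿ`. -/
def pder (i : Fin n) (f : En n → ℝ) (y : En n) : ℝ :=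
  fderiv ℝ f y (EuclideanSpace.single i 1)

/-- Euclidean Laplacian `Δf = Σ_i ∂_i ∂_i f` of a scalar function on `ℝⁿ`. -/
def lapS (f : En n → ℝ) (y : En n) : ℝ := ∑ i, pder i (fun z => pder i f z) y

/-- Componentwise partial derivative `∂_i u` of a matrix-valued function on `ℝⁿ`. -/
def pderM (i : Fin n) (u : En n → Mat n) (y : En n) : Mat n :=
  fun μ ν => pder i (fun z => u z μ ν) y

/-- Componentwise Laplacian `Δu` of a matrix-valued function on `ℝⁿ`. -/
def lapM (u : En n → Mat n) (y : En n) : Mat n := fun μ ν => lapS (fun z => u z μ ν) y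

/-- The constant `a = √(n−2)/(2√2)`. -/
def aC (n : ℕ) : ℝ := Real.sqrt ((n : ℝ) - 2) / (2 * Real.sqrt 2)

/-- The constant `b = (1/2)(6n − 12 − (n+2)√(2n−4))`. -/
def bC (n : ℕ) : ℝ := (1 / 2) * (6 * (n : ℝ) - 12 - ((n : ℝ) + 2) * Real.sqrt (2 * (n : ℝ) - 4))

/-- `σ_i(y)`, the skew matrix with entries `(σ_i(y))^μ_ν = δ_{iν} y^μ − δ_{iμ} y^ν`. -/
def sigmaM (i : Fin n) (y : En n) : Mat n :=
  fun μ ν => (if i = ν then y μ else 0) - (if i = μ then y ν else 0)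

/-- The soliton connection `W_i(y) = σ_i(y)/(a|y|² + b)`. -/
def Wc (i : Fin n) (y : En n) : Mat n :=
  fun μ ν => sigmaM i y μ ν / (aC n * ‖y‖ ^ 2 + bC n)

/-- The curvature `F_{ij} = ∂_i W_j − ∂_j W_i + [W_i, W_j]` of the soliton connection `W`. -/
def Fc (i j : Fin n) (y : En n) : Mat n :=
  pderM i (Wc j) y - pderM j (Wc i) y + brkt (Wc i y) (Wc j y)

/-- The linearized operator `L` of the rescaled Yang–Mills de Turck flow at the soliton `W`:
`(Lu)_j = Δu_j − (1/2)Σ_i y_i ∂_i u_j − (1/2)u_j + 2Σ_i [W_i, ∂_i u_j]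
  + Σ_i [W_i, [W_i, u_j]] + 2Σ_i [u_i, F_{ij}]`. -/
def Lop (u : En n → Fin n → Mat n) (y : En n) (j : Fin n) : Mat n :=
  lapM (fun z => u z j) y
    - (1 / 2 : ℝ) • (∑ i, y i • pderM i (fun z => u z j) y)
    - (1 / 2 : ℝ) • u y j
    + (2 : ℝ) • ∑ i, brkt (Wc i y) (pderM i (fun z => u z j) y)
    + ∑ i, brkt (Wc i y) (brkt (Wc i y) (u y j))
    + (2 : ℝ) • ∑ i, brkt (u y i) (Fc i j y)

/-- Squared Frobenius norm of a tuple of matrices: `‖u‖_F² = Σ_j ‖u_j‖_F²`. -/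
def tnormSq (v : Fin n → Mat n) : ℝ := ∑ j, fipE (v j) (v j)

/-- The Gaussian weight `ρ(y) = e^{−|y|²/4}`. -/
def gauss (y : En n) : ℝ := Real.exp (-‖y‖ ^ 2 / 4)

end

/-- The tuple `g` defined by `g_j(y) = σ_j(y)/(a|y|² + b)²`. -/
noncomputable def gTime (n : ℕ) : En n → Fin n → Mat n :=
  fun y j μ ν => sigmaM j y μ ν / (aC n * ‖y‖ ^ 2 + bC n) ^ 2


/-!
Put `P(y) = 1 / (a|y|² + b)`. The connection and the eigenfunction are the fields `Pᵏ σ_j` with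
`k = 1` and `k = 2`. Since `σ_j(y) = y ∧ e_j` is linear in `y`, every sum over `i` in `L` reduces
to the three identities `Σ_i y_i σ_i = 0`, `Σ_i [σ_i, ∂_i σ_j] = (n - 2) σ_j` and
`Σ_i [σ_i, [σ_i, σ_j]] = -(n - 2)|y|² σ_j`. This gives
`L(Pᵏ σ_j) = ((4k(k + 1)a² - 3(n - 2))|y|² Pᵏ⁺² + (ka|y|² + 6(n - 2) - 2ka(n + 2)) Pᵏ⁺¹ - Pᵏ) σ_j`.
As `8a² = n - 2`, the first coefficient vanishes for `k = 2`; as `b = 3(n - 2) - 2a(n + 2)`, the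
second one is then `2(a|y|² + b) = 2 / P`, which leaves `2P² - P² = P²`.
The denominator is positive for `5 ≤ n ≤ 9` because `b = 8a(2a - 1)(1 - a)` and `1/2 < a < 1`.
-/

noncomputable section

open Filter Topology
open scoped RealInnerProductSpace

local notation "𝐞" i:max => EuclideanSpace.single i (1 : ℝ)

section Constants

theorem aC_eq_sqrt (n : ℕ) : aC n = √(((n : ℝ) - 2) / 8) := by
  have h8 : √(8 : ℝ) = 2 * √2 := by
    rw [show (8 : ℝ) = 2 ^ 2 * 2 by norm_num, Real.sqrt_mul (by positivity),
      Real.sqrt_sq zero_le_two]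
  rw [aC, Real.sqrt_div' _ (by norm_num), h8]

theorem natCast_eq_aC_sq {n : ℕ} (hn : 2 ≤ n) : (n : ℝ) = 8 * aC n ^ 2 + 2 := by
  have h : (2 : ℝ) ≤ n := by exact_mod_cast hn
  rw [aC_eq_sqrt, Real.sq_sqrt (by linarith)]
  ring

theorem half_lt_aC {n : ℕ} (hn : 4 < n) : 1 / 2 < aC n := by
  have h : (4 : ℝ) < n := by exact_mod_cast hn
  rw [aC_eq_sqrt, Real.lt_sqrt (by norm_num)]
  linarith

theorem aC_lt_one {n : ℕ} (hn : n < 10) : aC n < 1 := by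
  have h : (n : ℝ) < 10 := by exact_mod_cast hn
  rw [aC_eq_sqrt, Real.sqrt_lt' one_pos]
  linarith

theorem bC_eq_aC (n : ℕ) : bC n = 3 * ((n : ℝ) - 2) - 2 * aC n * (n + 2) := by
  have h : √(2 * (n : ℝ) - 4) = 4 * aC n := by
    rw [aC_eq_sqrt, show 2 * (n : ℝ) - 4 = 4 ^ 2 * ((n - 2) / 8) by ring,
      Real.sqrt_mul (by positivity), Real.sqrt_sq (by norm_num)]
  rw [bC, h]
  ring

theorem bC_eq_mul {n : ℕ} (hn : 2 ≤ n) :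
    bC n = 8 * aC n * (2 * aC n - 1) * (1 - aC n) := by
  rw [bC_eq_aC, natCast_eq_aC_sq hn]
  ring

theorem bC_pos {n : ℕ} (hn : 4 < n) (hn' : n < 10) : 0 < bC n := by
  have hlow := half_lt_aC hn
  have hupp := aC_lt_one hn'
  rw [bC_eq_mul (by lia)]
  exact mul_pos (mul_pos (by linarith) (by linarith)) (by linarith)

end Constants

section Bracket

variable {n : ℕ}

/-- The matrix commutator `[A, B]` as a bilinear map, so that the library's lemmas on linear maps
apply to it. -/
def brktBilin : Mat n →ₗ[ℝ] Mat n →ₗ[ℝ] Mat n :=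
  LinearMap.mk₂ ℝ brkt
    (fun A A' B => by
      ext
      simp only [brkt, Pi.add_apply, ← Finset.sum_add_distrib]
      exact Finset.sum_congr rfl fun _ _ => by ring)
    (fun c A B => by
      ext
      simp only [brkt, Pi.smul_apply, smul_eq_mul, Finset.mul_sum]
      exact Finset.sum_congr rfl fun _ _ => by ring)
    (fun A B B' => by
      ext
      simp only [brkt, Pi.add_apply, ← Finset.sum_add_distrib]
      exact Finset.sum_congr rfl fun _ _ => by ring)
    (fun c A B => by
      ext
      simp only [brkt, Pi.smul_apply, smul_eq_mul, Finset.mul_sum]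
      exact Finset.sum_congr rfl fun _ _ => by ring)

theorem brktBilin_apply (A B : Mat n) : brktBilin A B = brkt A B := rfl

theorem brktBilin_self (A : Mat n) : brktBilin A A = 0 := by
  ext
  simp [brktBilin_apply, brkt]

end Bracket

section Wedge

variable {n : ℕ}

/-- The skew-symmetric matrix `x ∧ v = x vᵀ - v xᵀ`, as a bilinear function of `x` and `v`. With it
`σ_j(y) = y ∧ e_j`, and the constant matrix `∂_i σ_j` is `e_i ∧ e_j`. -/
def wedge : En n →ₗ[ℝ] En n →ₗ[ℝ] Mat n :=
  LinearMap.mk₂ ℝ (fun x v μ ν => x μ * v ν - x ν * v μ)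
    (fun x x' v => by ext; simp only [PiLp.add_apply, Pi.add_apply]; ring)
    (fun c x v => by ext; simp only [PiLp.smul_apply, Pi.smul_apply, smul_eq_mul]; ring)
    (fun x v v' => by ext; simp only [PiLp.add_apply, Pi.add_apply]; ring)
    (fun c x v => by ext; simp only [PiLp.smul_apply, Pi.smul_apply, smul_eq_mul]; ring)

theorem wedge_apply (x v : En n) (μ ν : Fin n) : wedge x v μ ν = x μ * v ν - x ν * v μ := rfl

theorem wedge_self (x : En n) : wedge x x = 0 := by
  ext μ ν
  simp only [wedge_apply, Pi.zero_apply]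
  ring

theorem wedge_swap (x v : En n) : wedge v x = -wedge x v := by
  ext μ ν
  simp only [wedge_apply, Pi.neg_apply]
  ring

theorem sigmaM_eq_wedge (j : Fin n) (y : En n) : sigmaM j y = wedge y (𝐞 j) := by
  ext μ ν
  simp [sigmaM, wedge_apply, eq_comm]

theorem sum_smul_single (y : En n) : ∑ i, y i • 𝐞 i = y := by
  simpa using (EuclideanSpace.basisFun (Fin n) ℝ).sum_repr y

theorem sum_smul_wedge_single_left (y v : En n) : ∑ i, y i • wedge (𝐞 i) v = wedge y v := by
  conv_rhs => rw [← sum_smul_single y]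
  simp only [map_sum, map_smul, LinearMap.sum_apply, LinearMap.smul_apply]

theorem sum_smul_wedge_single_right (y v : En n) : ∑ i, v i • wedge y (𝐞 i) = wedge y v := by
  conv_rhs => rw [← sum_smul_single v]
  simp only [map_sum, map_smul]

theorem brktBilin_wedge_wedge (x v z w : En n) :
    brktBilin (wedge x v) (wedge z w)
      = ⟪v, z⟫ • wedge x w - ⟪x, z⟫ • wedge v w - ⟪v, w⟫ • wedge x z + ⟪x, w⟫ • wedge v z := by
  ext μ ν
  simp only [brktBilin_apply, brkt, wedge_apply, PiLp.inner_apply, Pi.add_apply, Pi.sub_apply,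
    Pi.smul_apply, smul_eq_mul, Finset.sum_mul, ← Finset.sum_add_distrib,
    ← Finset.sum_sub_distrib, RCLike.inner_apply, conj_trivial]
  exact Finset.sum_congr rfl fun k _ => by ring

theorem brktBilin_wedge_same_left (x v w : En n) :
    brktBilin (wedge x v) (wedge x w)
      = ⟪v, x⟫ • wedge x w - ‖x‖ ^ 2 • wedge v w - ⟪x, w⟫ • wedge x v := by
  rw [brktBilin_wedge_wedge, wedge_self, wedge_swap x v, real_inner_self_eq_norm_sq]
  module

theorem sum_smul_brktBilin_wedge (y : En n) (B : Mat n) :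
    ∑ i, y i • brktBilin (wedge y (𝐞 i)) B = 0 := by
  calc ∑ i, y i • brktBilin (wedge y (𝐞 i)) B
      = brktBilin (∑ i, y i • wedge y (𝐞 i)) B := by
        simp only [map_sum, map_smul, LinearMap.sum_apply, LinearMap.smul_apply]
    _ = 0 := by rw [sum_smul_wedge_single_right, wedge_self, map_zero, LinearMap.zero_apply]

theorem sum_brktBilin_wedge_wedge_single (y v : En n) :
    ∑ i, brktBilin (wedge y (𝐞 i)) (wedge (𝐞 i) v) = ((n : ℝ) - 2) • wedge y v := by
  simp only [brktBilin_wedge_wedge, EuclideanSpace.inner_single_left,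
    EuclideanSpace.inner_single_right, wedge_self, conj_trivial, one_mul, smul_zero, add_zero,
    Finset.sum_sub_distrib, sum_smul_wedge_single_left, sum_smul_wedge_single_right,
    PiLp.single_apply, if_true, one_smul, Finset.sum_const, Finset.card_univ, Fintype.card_fin]
  module

theorem sum_brktBilin_brktBilin_wedge (y v : En n) :
    ∑ i, brktBilin (wedge y (𝐞 i)) (brktBilin (wedge y (𝐞 i)) (wedge y v))
      = -(((n : ℝ) - 2) * ‖y‖ ^ 2) • wedge y v := by
  have h (i : Fin n) : brktBilin (wedge y (𝐞 i)) (brktBilin (wedge y (𝐞 i)) (wedge y v))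
      = y i • brktBilin (wedge y (𝐞 i)) (wedge y v)
        - ‖y‖ ^ 2 • brktBilin (wedge y (𝐞 i)) (wedge (𝐞 i) v) := by
    conv_lhs => rw [brktBilin_wedge_same_left y (𝐞 i) v]
    simp only [map_sub, map_smul, brktBilin_self, smul_zero, sub_zero,
      EuclideanSpace.inner_single_left, conj_trivial, one_mul]
  simp only [h, Finset.sum_sub_distrib, ← Finset.smul_sum, sum_smul_brktBilin_wedge,
    sum_brktBilin_wedge_wedge_single]
  module

end Wedge

section Derivatives

variable {n : ℕ} {u v : En n → Mat n} {y : En n}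

theorem pderM_of_hasFDerivAt {u' : En n →L[ℝ] Mat n} (h : HasFDerivAt u u' y) (i : Fin n) :
    pderM i u y = u' (𝐞 i) := by
  ext μ ν
  have hμν := hasFDerivAt_pi'.1 (hasFDerivAt_pi'.1 h μ) ν
  simp [pderM, pder, hμν.fderiv]

theorem pderM_congr (h : u =ᶠ[𝓝 y] v) (i : Fin n) : pderM i u y = pderM i v y := by
  ext μ ν
  exact congrArg (fun L : En n →L[ℝ] ℝ => L (𝐞 i)) (h.fun_comp (· μ ν)).fderiv_eq

theorem lapM_eq_sum (u : En n → Mat n) (y : En n) : lapM u y = ∑ i, pderM i (pderM i u) y := by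
  ext μ ν
  simp only [lapM, lapS, pderM, Finset.sum_apply]

end Derivatives

section InvQuad

variable {E : Type*} [NormedAddCommGroup E] [InnerProductSpace ℝ E]

/-- The radial function `1 / (a|y|² + b)`; it takes the junk value `0` where the denominator
vanishes. -/
def invQuad (a b : ℝ) (y : E) : ℝ := (a * ‖y‖ ^ 2 + b)⁻¹

theorem hasFDerivAt_invQuad_pow {a b : ℝ} {y : E} (hy : a * ‖y‖ ^ 2 + b ≠ 0) (k : ℕ) :
    HasFDerivAt (fun z => invQuad a b z ^ k)
      (-(2 * k * a * invQuad a b y ^ (k + 1)) • innerSL ℝ y) y := by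
  have hquad : HasFDerivAt (fun z : E => a * ‖z‖ ^ 2 + b) (a • (2 : ℕ) • innerSL ℝ y) y :=
    ((hasStrictFDerivAt_norm_sq y).hasFDerivAt.const_mul a).add_const b
  have hinv : HasFDerivAt (invQuad a b) (-(invQuad a b y ^ 2) • a • (2 : ℕ) • innerSL ℝ y) y :=
    ((hasDerivAt_inv hy).comp_hasFDerivAt y hquad).congr_fderiv (by rw [invQuad, inv_pow])
  refine (hinv.pow k).congr_fderiv ?_
  ext w
  cases k with
  | zero => simp
  | succ k =>
    simp only [add_tsub_cancel_right, nsmul_eq_mul, Nat.cast_add, Nat.cast_one, smul_apply,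
      Nat.cast_ofNat, smul_eq_mul]
    ring

end InvQuad

section InvQuadWedge

variable {n : ℕ} {a b : ℝ} {y : En n}

/-- The matrix field `(y ∧ v) / (a|y|² + b)ᵏ`. The connection component `W_j` is the case `k = 1`,
`v = e_j`, and the eigenfunction component `g_j` is the case `k = 2`, `v = e_j`. -/
def invQuadWedge (a b : ℝ) (k : ℕ) (v y : En n) : Mat n := invQuad a b y ^ k • wedge y v

theorem Wc_eq_invQuadWedge (i : Fin n) : Wc i = invQuadWedge (aC n) (bC n) 1 (𝐞 i) := by
  ext y μ ν
  simp only [Wc, invQuadWedge, invQuad, sigmaM_eq_wedge, Pi.smul_apply, smul_eq_mul]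
  ring

theorem gTime_eq_invQuadWedge (n : ℕ) :
    gTime n = fun y j => invQuadWedge (aC n) (bC n) 2 (𝐞 j) y := by
  ext y j μ ν
  simp only [gTime, invQuadWedge, invQuad, sigmaM_eq_wedge, Pi.smul_apply, smul_eq_mul, inv_pow]
  ring

theorem hasFDerivAt_invQuadWedge (hy : a * ‖y‖ ^ 2 + b ≠ 0) (k : ℕ) (v : En n) :
    HasFDerivAt (invQuadWedge a b k v)
      (invQuad a b y ^ k • (wedge.flip v).toContinuousLinearMap +
        (-(2 * k * a * invQuad a b y ^ (k + 1)) • innerSL ℝ y).smulRight (wedge y v)) y :=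
  (hasFDerivAt_invQuad_pow hy k).smul (wedge.flip v).toContinuousLinearMap.hasFDerivAt

theorem pderM_invQuadWedge (hy : a * ‖y‖ ^ 2 + b ≠ 0) (k : ℕ) (v : En n) (i : Fin n) :
    pderM i (invQuadWedge a b k v) y
      = invQuad a b y ^ k • wedge (𝐞 i) v - (2 * k * a * y i) • invQuadWedge a b (k + 1) v y := by
  rw [pderM_of_hasFDerivAt (hasFDerivAt_invQuadWedge hy k v)]
  simp only [invQuadWedge, add_apply, smul_apply, ContinuousLinearMap.smulRight_apply,
    LinearMap.coe_toContinuousLinearMap', LinearMap.flip_apply, coe_innerSL_apply,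
    EuclideanSpace.inner_single_right, Real.ringHom_apply, one_mul, smul_eq_mul]
  module

theorem pderM_pderM_invQuadWedge (hy : a * ‖y‖ ^ 2 + b ≠ 0) (k : ℕ) (v : En n) (i : Fin n) :
    pderM i (pderM i (invQuadWedge a b k v)) y
      = (4 * k * (k + 1) * a ^ 2 * y i ^ 2) • invQuadWedge a b (k + 2) v y
        - (2 * k * a) • invQuadWedge a b (k + 1) v y
        - (4 * k * a * invQuad a b y ^ (k + 1)) • y i • wedge (𝐞 i) v := by
  have hcont : Continuous fun z : En n => a * ‖z‖ ^ 2 + b := by fun_prop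
  have hnear : pderM i (invQuadWedge a b k v) =ᶠ[𝓝 y] fun z =>
      invQuad a b z ^ k • wedge (𝐞 i) v - (2 * k * a * z i) • invQuadWedge a b (k + 1) v z := by
    filter_upwards [hcont.continuousAt.eventually_ne hy] with z hz
    exact pderM_invQuadWedge hz k v i
  have hcoord : HasFDerivAt (fun z : En n => 2 * k * a * z i)
      ((2 * k * a) • (EuclideanSpace.proj i : En n →L[ℝ] ℝ)) y :=
    (EuclideanSpace.proj i : En n →L[ℝ] ℝ).hasFDerivAt.const_mul (2 * k * a)
  have hfirst := ((hasFDerivAt_invQuad_pow hy k).smul_const (wedge (𝐞 i) v)).fun_sub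
    (hcoord.fun_smul (hasFDerivAt_invQuadWedge hy (k + 1) v))
  rw [pderM_congr hnear, pderM_of_hasFDerivAt hfirst]
  simp only [invQuadWedge, add_apply, sub_apply, smul_apply, ContinuousLinearMap.smulRight_apply,
    LinearMap.coe_toContinuousLinearMap', LinearMap.flip_apply, coe_innerSL_apply,
    EuclideanSpace.inner_single_right, PiLp.proj_apply, PiLp.single_eq_same, Real.ringHom_apply,
    Nat.cast_add, Nat.cast_one, one_mul, mul_one, smul_eq_mul]
  module

theorem lapM_invQuadWedge (hy : a * ‖y‖ ^ 2 + b ≠ 0) (k : ℕ) (v : En n) :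
    lapM (invQuadWedge a b k v) y
      = (4 * k * (k + 1) * a ^ 2 * ‖y‖ ^ 2) • invQuadWedge a b (k + 2) v y
        - (2 * k * a * (n + 2)) • invQuadWedge a b (k + 1) v y := by
  simp only [lapM_eq_sum, pderM_pderM_invQuadWedge hy, Finset.sum_sub_distrib, ← Finset.smul_sum,
    ← Finset.sum_smul, ← Finset.mul_sum, ← EuclideanSpace.real_norm_sq_eq,
    sum_smul_wedge_single_left, Finset.sum_const, Finset.card_univ, Fintype.card_fin]
  simp only [invQuadWedge]
  module

theorem sum_smul_pderM_invQuadWedge (hy : a * ‖y‖ ^ 2 + b ≠ 0) (k : ℕ) (v : En n) :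
    ∑ i, y i • pderM i (invQuadWedge a b k v) y
      = invQuadWedge a b k v y - (2 * k * a * ‖y‖ ^ 2) • invQuadWedge a b (k + 1) v y := by
  have h (i : Fin n) : y i • pderM i (invQuadWedge a b k v) y
      = invQuad a b y ^ k • y i • wedge (𝐞 i) v
        - y i ^ 2 • (2 * k * a) • invQuadWedge a b (k + 1) v y := by
    rw [pderM_invQuadWedge hy]
    module
  simp only [h, Finset.sum_sub_distrib, ← Finset.smul_sum, ← Finset.sum_smul,
    sum_smul_wedge_single_left, ← EuclideanSpace.real_norm_sq_eq]
  simp only [invQuadWedge]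
  module

theorem sum_brkt_pderM_invQuadWedge (hy : a * ‖y‖ ^ 2 + b ≠ 0) (l k : ℕ) (v : En n) :
    ∑ i, brkt (invQuadWedge a b l (𝐞 i) y) (pderM i (invQuadWedge a b k v) y)
      = ((n : ℝ) - 2) • invQuadWedge a b (l + k) v y := by
  have h (i : Fin n) : brkt (invQuadWedge a b l (𝐞 i) y) (pderM i (invQuadWedge a b k v) y)
      = invQuad a b y ^ (l + k) • brktBilin (wedge y (𝐞 i)) (wedge (𝐞 i) v)
        - (2 * k * a * invQuad a b y ^ (l + k + 1)) •
          y i • brktBilin (wedge y (𝐞 i)) (wedge y v) := by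
    rw [pderM_invQuadWedge hy, ← brktBilin_apply]
    simp only [invQuadWedge, map_sub, map_smul, LinearMap.smul_apply]
    module
  simp only [h, Finset.sum_sub_distrib, ← Finset.smul_sum, sum_smul_brktBilin_wedge,
    sum_brktBilin_wedge_wedge_single, smul_zero, sub_zero]
  exact smul_comm _ _ _

theorem sum_brkt_brkt_invQuadWedge (l k : ℕ) (v y : En n) :
    ∑ i, brkt (invQuadWedge a b l (𝐞 i) y)
        (brkt (invQuadWedge a b l (𝐞 i) y) (invQuadWedge a b k v y))
      = -(((n : ℝ) - 2) * ‖y‖ ^ 2) • invQuadWedge a b (2 * l + k) v y := by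
  simp only [← brktBilin_apply, invQuadWedge, map_smul, LinearMap.smul_apply, ← Finset.smul_sum,
    sum_brktBilin_brktBilin_wedge]
  module

end InvQuadWedge

section Soliton

variable {n : ℕ} {y : En n}

theorem Fc_eq (hy : aC n * ‖y‖ ^ 2 + bC n ≠ 0) (i j : Fin n) :
    Fc i j y
      = (2 * invQuad (aC n) (bC n) y - ‖y‖ ^ 2 * invQuad (aC n) (bC n) y ^ 2) • wedge (𝐞 i) (𝐞 j)
        + ((1 - 2 * aC n) * invQuad (aC n) (bC n) y ^ 2) •
          (y i • wedge y (𝐞 j) - y j • wedge y (𝐞 i)) := by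
  have hbrkt : brktBilin (wedge y (𝐞 i)) (wedge y (𝐞 j))
      = y i • wedge y (𝐞 j) - ‖y‖ ^ 2 • wedge (𝐞 i) (𝐞 j) - y j • wedge y (𝐞 i) := by
    rw [brktBilin_wedge_same_left, EuclideanSpace.inner_single_left,
      EuclideanSpace.inner_single_right, conj_trivial, conj_trivial, one_mul, one_mul]
  simp only [Fc, Wc_eq_invQuadWedge, pderM_invQuadWedge hy, ← brktBilin_apply]
  simp only [invQuadWedge, map_smul, LinearMap.smul_apply, hbrkt, wedge_swap (𝐞 i) (𝐞 j),
    Nat.cast_one]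
  module

theorem sum_brkt_invQuadWedge_Fc (hy : aC n * ‖y‖ ^ 2 + bC n ≠ 0) (k : ℕ) (j : Fin n) :
    ∑ i, brkt (invQuadWedge (aC n) (bC n) k (𝐞 i) y) (Fc i j y)
      = (2 * ((n : ℝ) - 2)) • invQuadWedge (aC n) (bC n) (k + 1) (𝐞 j) y
        - (((n : ℝ) - 2) * ‖y‖ ^ 2) • invQuadWedge (aC n) (bC n) (k + 2) (𝐞 j) y := by
  have h : ∑ i, brktBilin (wedge y (𝐞 i)) (Fc i j y)
      = ((2 * invQuad (aC n) (bC n) y - ‖y‖ ^ 2 * invQuad (aC n) (bC n) y ^ 2) * ((n : ℝ) - 2)) •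
        wedge y (𝐞 j) := by
    simp only [Fc_eq hy, map_add, map_sub, map_smul, brktBilin_self, smul_zero, sub_zero,
      Finset.sum_add_distrib, ← Finset.smul_sum, sum_smul_brktBilin_wedge, add_zero,
      sum_brktBilin_wedge_wedge_single, mul_smul]
  simp only [← brktBilin_apply, invQuadWedge, map_smul, LinearMap.smul_apply, ← Finset.smul_sum, h]
  module

theorem Lop_invQuadWedge (hy : aC n * ‖y‖ ^ 2 + bC n ≠ 0) (k : ℕ) (j : Fin n) :
    Lop (fun z i => invQuadWedge (aC n) (bC n) k (𝐞 i) z) y j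
      = ((4 * k * (k + 1) * aC n ^ 2 - 3 * ((n : ℝ) - 2)) * ‖y‖ ^ 2) •
            invQuadWedge (aC n) (bC n) (k + 2) (𝐞 j) y
        + (k * aC n * ‖y‖ ^ 2 + 6 * ((n : ℝ) - 2) - 2 * k * aC n * (n + 2)) •
            invQuadWedge (aC n) (bC n) (k + 1) (𝐞 j) y
        - invQuadWedge (aC n) (bC n) k (𝐞 j) y := by
  simp only [Lop, Wc_eq_invQuadWedge, sum_brkt_brkt_invQuadWedge]
  rw [lapM_invQuadWedge hy, sum_smul_pderM_invQuadWedge hy, sum_brkt_pderM_invQuadWedge hy,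
    sum_brkt_invQuadWedge_Fc hy, add_comm 1 k, mul_one, add_comm 2 k]
  module

theorem quad_smul_invQuadWedge_succ {a b : ℝ} (hy : a * ‖y‖ ^ 2 + b ≠ 0) (k : ℕ) (v : En n) :
    (a * ‖y‖ ^ 2 + b) • invQuadWedge a b (k + 1) v y = invQuadWedge a b k v y := by
  rw [invQuadWedge, invQuadWedge, smul_smul, pow_succ' (invQuad a b y), ← mul_assoc,
    invQuad, mul_inv_cancel₀ hy, one_mul]

theorem time_translation_eigenfunction_general (hn : 2 ≤ n)
    (hy : aC n * ‖y‖ ^ 2 + bC n ≠ 0) (j : Fin n) :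
    Lop (gTime n) y j = gTime n y j := by
  rw [gTime_eq_invQuadWedge, Lop_invQuadWedge hy]
  simp only [← quad_smul_invQuadWedge_succ hy 2]
  rw [bC_eq_aC, natCast_eq_aC_sq hn]
  push_cast
  module

end Soliton

end

/-- The tuple `g_j(y) = σ_j(y)/(a|y|² + b)²` satisfies `L(g) = g` pointwise; i.e. `g` is an
eigenfunction of `−L` with eigenvalue `−1`, corresponding to time translation of the soliton. -/
theorem time_translation_eigenfunction (n : ℕ) (hn : 5 ≤ n) (hn' : n ≤ 9)
    (y : En n) (j : Fin n) :
    Lop (gTime n) y j = gTime n y j := by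
  have ha : 0 < aC n := one_half_pos.trans (half_lt_aC hn)
  have hb : 0 < bC n := bC_pos hn (Nat.lt_succ_of_le hn')
  exact time_translation_eigenfunction_general (by lia) (by positivity) j
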